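/- arXiv:2605.27926 — 3 statements merged into one kernel-verified Lean document; each statement's English description precedes it below -/
import Mathlib

section
/- The polynomial D(X) = 4(X²+1)³ + 27 in ℂ[X] has exactly six roots in ℂ, each of multiplicity one; that is, the multiset of roots of D has no repeated element and its underlying set has cardinality 6. -/
open Polynomial

/-- The polynomial `D(X) = 4(X²+1)³ + 27` in `ℂ[X]` has exactly six roots in `ℂ`, each of
multiplicity one: the multiset of roots has no repeated element and its underlying set has
cardinality 6. -/
theorem stmt_1 :
    ((4 : ℂ[X]) * (X ^ 2 + 1) ^ 3 + 27).roots.Nodup ∧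
      ((4 : ℂ[X]) * (X ^ 2 + 1) ^ 3 + 27).roots.toFinset.card = 6 := by
  have hd : derivative ((4 : ℂ[X]) * (X ^ 2 + 1) ^ 3 + 27) = 24 * X * (X ^ 2 + 1) ^ 2 := by
    have e : ((4 : ℂ[X]) * (X ^ 2 + 1) ^ 3 + 27)
        = C 4 * (X ^ 2 + 1) ^ 3 + C 27 := by rw [map_ofNat C 4, map_ofNat C 27]
    rw [e]
    simp only [derivative_add, derivative_C_mul, derivative_C, derivative_pow, derivative_X,
      derivative_one]
    rw [map_ofNat C 4]; simp only [map_natCast]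
    push_cast
    ring
  have hC : (C (5022⁻¹ : ℂ)) * 5022 = 1 := by
    rw [← map_ofNat C 5022, ← C_mul]
    norm_num
  have hsep : ((4 : ℂ[X]) * (X ^ 2 + 1) ^ 3 + 27).Separable := by
    refine ⟨C (5022⁻¹ : ℂ) * (186 - 24 * (X ^ 2 + 1) ^ 2),
      C (5022⁻¹ : ℂ) * ((4 * (X ^ 2 + 1) ^ 2 + 4 * (X ^ 2 + 1) - 27) * X), ?_⟩
    rw [hd]
    linear_combination hC
  have hdeg : ((4 : ℂ[X]) * (X ^ 2 + 1) ^ 3 + 27).natDegree = 6 := by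
    compute_degree!
  have hn := nodup_roots hsep
  refine ⟨hn, ?_⟩
  rw [Multiset.toFinset_card_of_nodup hn, ← hdeg]
  exact IsAlgClosed.card_roots_eq_natDegree
end

section
/- The group of rational points E₀(ℚ) of the elliptic curve E₀ over ℚ given by y² = x³ + x + 1 is an infinite group. -/
/-- The Weierstrass curve `E₀ : y² = x³ + x + 1` over `ℚ`. -/
def E₀ : WeierstrassCurve ℚ := ⟨0, 0, 0, 1, 1⟩

/-- By repeated doubling of `(1/4, 9/8)`, there are points whose abscissa has exact
denominator `4 ^ (k+1)` at the prime two. -/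
lemma exists_pt (k : ℕ) : ∃ (a d : ℤ) (x y : ℚ), Odd a ∧ Odd d ∧ y ≠ 0 ∧
    y ^ 2 = x ^ 3 + x + 1 ∧ x * (4 ^ (k + 1) * d) = a := by
  induction k with
  | zero =>
    exact ⟨1, 1, 1 / 4, 9 / 8, by decide, by decide, by norm_num, by norm_num, by norm_num⟩
  | succ k ih =>
    obtain ⟨a, d, x, y, ha, hd, hy, h, hx⟩ := ih
    have key : ∀ (b c : ℤ) (x y : ℚ) (n : ℕ), Odd b → Odd c → y ^ 2 = x ^ 3 + x + 1 →
        x * (4 ^ (n + 1) * c) = b → y ≠ 0 := by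
      rintro b c x y n hb hc h hx rfl
      have h2 : b ^ 3 + b * (4 ^ (n + 1) * c) ^ 2 + (4 ^ (n + 1) * c) ^ 3 = 0 := by
        have : (b : ℚ) ^ 3 + b * (4 ^ (n + 1) * c) ^ 2 + (4 ^ (n + 1) * c) ^ 3 = 0 := by
          rw [← hx]
          linear_combination (-(4 ^ (n + 1) * (c : ℚ)) ^ 3) * h
        exact_mod_cast this
      have h3 := congrArg Even h2
      simp [Int.even_add, Int.even_mul, Int.even_pow, parity_simps, hb, hc,
        Int.not_even_iff_odd.2 hb, show Even (4 : ℤ) by decide] at h3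
    have hd0 : (d : ℚ) ≠ 0 := by
      rintro h0
      have : d = 0 := by exact_mod_cast h0
      subst this
      simp at hd
    obtain ⟨e, he⟩ : ∃ e : ℤ, e = 4 ^ (k + 1) * d := ⟨_, rfl⟩
    have hee : Even e := by
      rw [he]
      simp [Int.even_mul, Int.even_pow, show Even (4 : ℤ) by decide]
    have heq : (e : ℚ) = 4 ^ (k + 1) * d := by rw [he]; push_cast; rfl
    rw [← heq] at hx
    have hna := Int.not_even_iff_odd.2 ha
    have ha' : Odd (a ^ 4 - 2 * a ^ 2 * e ^ 2 - 8 * a * e ^ 3 + e ^ 4) := by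
      rw [← Int.not_even_iff_odd]
      simp [Int.even_add, Int.even_sub, Int.even_mul, Int.even_pow, hna, hee]
    have hd' : Odd (d * (a ^ 3 + a * e ^ 2 + e ^ 3)) := by
      rw [← Int.not_even_iff_odd]
      simp [Int.even_add, Int.even_mul, Int.even_pow, hna, hee, Int.not_even_iff_odd.2 hd]
    have hcurve : ∃ x' y' : ℚ, y' ^ 2 = x' ^ 3 + x' + 1 ∧
        x' * (4 * y ^ 2) = x ^ 4 - 2 * x ^ 2 - 8 * x + 1 := by
      obtain ⟨m, hm⟩ : ∃ m : ℚ, m * (2 * y) = 3 * x ^ 2 + 1 :=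
        ⟨(3 * x ^ 2 + 1) / (2 * y), by field_simp⟩
      refine ⟨m ^ 2 - 2 * x, m * (x - (m ^ 2 - 2 * x)) - y, ?_, ?_⟩
      · linear_combination h + (m ^ 2 - 3 * x) * hm
      · linear_combination (m * (2 * y) + 3 * x ^ 2 + 1) * hm - 8 * x * h
    obtain ⟨x', y', h', hx'⟩ := hcurve
    have hfin : x' * (4 ^ (k + 1 + 1) * ((d * (a ^ 3 + a * e ^ 2 + e ^ 3) : ℤ) : ℚ)) =
        ((a ^ 4 - 2 * a ^ 2 * e ^ 2 - 8 * a * e ^ 3 + e ^ 4 : ℤ) : ℚ) := by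
      have h4 : (4 : ℚ) ^ (k + 1 + 1) * ((d * (a ^ 3 + a * e ^ 2 + e ^ 3) : ℤ) : ℚ) =
          4 * e * (a ^ 3 + a * e ^ 2 + e ^ 3) := by
        push_cast
        rw [heq]
        ring
      rw [h4]
      push_cast
      rw [← hx]
      linear_combination (e : ℚ) ^ 4 * hx' - 4 * x' * (e : ℚ) ^ 4 * h
    exact ⟨_, _, x', y', ha', hd', key _ _ _ _ _ ha' hd' h' hfin, h', hfin⟩

lemma denom_aux (m n : ℕ) (hmn : m < n) (a b c d : ℤ) (x : ℚ) (hb : Odd b)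
    (hc : Odd c) (h1 : x * (4 ^ (m + 1) * d) = c) (h2 : x * (4 ^ (n + 1) * a) = b)
    (hd : Odd d) : False := by
  obtain ⟨t, rfl⟩ := Nat.exists_eq_add_of_lt hmn
  have h3 : b * d = 4 * (4 ^ t * a * c) := by
    have : (b : ℚ) * d = 4 * (4 ^ t * a * c) := by
      rw [← h1, ← h2]; ring
    exact_mod_cast this
  have h4 := hb.mul hd
  rw [h3, ← Int.not_even_iff_odd] at h4
  exact h4 (Even.mul_right (by decide) _)

/-- The group of rational points `E₀(ℚ)` of the elliptic curve `E₀ : y² = x³ + x + 1` over `ℚ`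
is an infinite group. -/
theorem stmt_5 : Infinite E₀.toAffine.Point := by
  choose a d x y ha hd hy h hx using exists_pt
  have hns : ∀ k, E₀.toAffine.Nonsingular (x k) (y k) := by
    intro k
    rw [WeierstrassCurve.Affine.nonsingular_iff, WeierstrassCurve.Affine.equation_iff]
    refine ⟨by simp [E₀, h k], Or.inr ?_⟩
    simp only [E₀]
    intro h0
    exact hy k (by linarith)
  refine Infinite.of_injective
    (fun k => WeierstrassCurve.Affine.Point.some (x k) (y k) (hns k)) ?_
  intro m n hmn
  have hxx : x m = x n := by
    simp only [WeierstrassCurve.Affine.Point.some.injEq] at hmn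
    exact hmn.1
  rcases lt_trichotomy m n with hlt | heq | hlt
  · exact (denom_aux m n hlt _ _ _ _ (x n) (ha n) (ha m) (hxx ▸ hx m) (hx n) (hd m)).elim
  · exact heq
  · exact (denom_aux n m hlt _ _ _ _ (x n) (ha m) (ha n) (hx n) (hxx ▸ hx m) (hd n)).elim
end

section
/- Let K = ℚ(t) and let E be the elliptic curve over K given by y² = x³ + (t²+1)x + 1. Then the group E(K) of K-rational points of E is infinite. -/
/-- The elliptic curve `E : y² = x³ + (t²+1)x + 1` over `K = ℚ(t)`. -/
noncomputable def Eq_t : WeierstrassCurve (RatFunc ℚ) := ⟨0, 0, 0, RatFunc.X ^ 2 + 1, 1⟩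

open Polynomial in
/-- `x ∈ ℚ(t)` has degree `4` at infinity with leading coefficient `c`. -/
def LeadFour (c : ℚ) (x : RatFunc ℚ) : Prop :=
  ∃ (m : ℕ) (p q : ℚ[X]), p.natDegree ≤ m + 4 ∧ q.natDegree ≤ m ∧ q.coeff m ≠ 0 ∧
    p.coeff (m + 4) = c * q.coeff m ∧
    x * algebraMap ℚ[X] (RatFunc ℚ) q = algebraMap ℚ[X] (RatFunc ℚ) p

open Polynomial in
lemma LeadFour.unique {c d : ℚ} {x : RatFunc ℚ} (h : LeadFour c x) (h' : LeadFour d x) :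
    c = d := by
  obtain ⟨m, p, q, hp, hq, hq0, hpc, hx⟩ := h
  obtain ⟨n, r, s, hr, hs, hs0, hrc, hy⟩ := h'
  have key : p * s = r * q := by
    apply RatFunc.algebraMap_injective ℚ
    rw [map_mul, map_mul, ← hx, ← hy]
    ring
  have h1 := congrArg (fun f => f.coeff ((m + 4) + n)) key
  have h2 : (p * s).coeff ((m + 4) + n) = p.coeff (m + 4) * s.coeff n :=
    coeff_mul_add_eq_of_natDegree_le hp hs
  have h3 : (r * q).coeff ((n + 4) + m) = r.coeff (n + 4) * q.coeff m :=
    coeff_mul_add_eq_of_natDegree_le hr hq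
  have e : (m + 4) + n = (n + 4) + m := by omega
  rw [h2, e, h3, hpc, hrc] at h1
  have : (c - d) * (q.coeff m * s.coeff n) = 0 := by linear_combination h1
  rcases mul_eq_zero.1 this with h | h
  · linarith
  · exact absurd h (mul_ne_zero hq0 hs0)

open Polynomial in
lemma coeff_add_small {f g : ℚ[X]} {N : ℕ} (h : g.natDegree < N) :
    (f + g).coeff N = f.coeff N := by
  rw [coeff_add, coeff_eq_zero_of_natDegree_lt h, add_zero]

lemma algebraMap_A : algebraMap (Polynomial ℚ) (RatFunc ℚ) (Polynomial.X ^ 2 + 1)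
    = RatFunc.X ^ 2 + 1 := by
  simp [RatFunc.algebraMap_X]

open Polynomial in
lemma LeadFour.cubic_ne {c : ℚ} {x : RatFunc ℚ} (hc : c ≠ 0) (h : LeadFour c x) :
    x ^ 3 + (RatFunc.X ^ 2 + 1) * x + 1 ≠ 0 := by
  obtain ⟨m, p, q, hp, hq, hq0, hpc, hx⟩ := h
  intro h0
  have key : p ^ 3 + ((X ^ 2 + 1) * p * q ^ 2 + q ^ 3) = 0 := by
    apply RatFunc.algebraMap_injective ℚ
    simp only [map_add, map_mul, map_pow, ← hx, map_zero]
    have := algebraMap_A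
    simp only [map_add, map_pow] at this
    rw [this]
    linear_combination (algebraMap ℚ[X] (RatFunc ℚ) q) ^ 3 * h0
  have h1 := congrArg (fun f => f.coeff (3 * (m + 4))) key
  rw [coeff_add_small, coeff_pow_of_natDegree_le hp, hpc] at h1
  · simp [hc, hq0] at h1
  · have : ((X ^ 2 + 1) * p * q ^ 2 + q ^ 3 : ℚ[X]).natDegree ≤ 2 + (m + 4) + 2 * m := by
      compute_degree <;> omega
    omega

open Polynomial in
lemma LeadFour.double {c : ℚ} {x x' : RatFunc ℚ} (hc : c ≠ 0) (h : LeadFour c x)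
    (h' : x' * (4 * (x ^ 3 + (RatFunc.X ^ 2 + 1) * x + 1)) =
      x ^ 4 - 2 * (RatFunc.X ^ 2 + 1) * x ^ 2 - 8 * x + (RatFunc.X ^ 2 + 1) ^ 2) :
    LeadFour (c / 4) x' := by
  obtain ⟨m, p, q, hp, hq, hq0, hpc, hx⟩ := h
  have hA := algebraMap_A
  simp only [map_add, map_pow] at hA
  have hd : ((X ^ 2 + 1) * p * q ^ 2 + q ^ 3 : ℚ[X]).natDegree ≤ 2 + (m + 4) + 2 * m := by
    compute_degree <;> omega
  have hd3 : (p ^ 3 + ((X ^ 2 + 1) * p * q ^ 2 + q ^ 3) : ℚ[X]).natDegree ≤ 3 * (m + 4) := by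
    refine natDegree_add_le_of_degree_le (natDegree_pow_le_of_le 3 hp) (by omega)
  have hn : (-(2 * (X ^ 2 + 1) * p ^ 2 * q ^ 2) - 8 * p * q ^ 3 + (X ^ 2 + 1) ^ 2 * q ^ 4
      : ℚ[X]).natDegree ≤ 2 + 2 * (m + 4) + 2 * m := by
    compute_degree <;> omega
  have hqc : (C 4 * q * (p ^ 3 + ((X ^ 2 + 1) * p * q ^ 2 + q ^ 3))).coeff (4 * m + 12)
      = 4 * q.coeff m * (c * q.coeff m) ^ 3 := by
    have e : 4 * m + 12 = m + 3 * (m + 4) := by ring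
    rw [e, coeff_mul_add_eq_of_natDegree_le ((natDegree_C_mul_le _ _).trans hq) hd3, coeff_C_mul,
      coeff_add_small (by omega), coeff_pow_of_natDegree_le hp, hpc]
  refine ⟨4 * m + 12, p ^ 4 + (-(2 * (X ^ 2 + 1) * p ^ 2 * q ^ 2) - 8 * p * q ^ 3
    + (X ^ 2 + 1) ^ 2 * q ^ 4), C 4 * q * (p ^ 3 + ((X ^ 2 + 1) * p * q ^ 2 + q ^ 3)),
    ?_, ?_, ?_, ?_, ?_⟩
  · refine natDegree_add_le_of_degree_le ((natDegree_pow_le_of_le 4 hp).trans (by omega))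
      (by omega)
  · refine (natDegree_mul_le_of_le ((natDegree_C_mul_le _ _).trans hq) hd3).trans (by omega)
  · rw [hqc]
    positivity
  · rw [hqc, coeff_add_small (by omega)]
    have e : 4 * m + 12 + 4 = 4 * (m + 4) := by ring
    rw [e, coeff_pow_of_natDegree_le hp, hpc]
    ring
  · have h4 : algebraMap ℚ[X] (RatFunc ℚ) (C 4) = 4 := by
      rw [show (C 4 : ℚ[X]) = 4 from rfl, map_ofNat]
    simp only [map_add, map_mul, map_pow, map_sub, map_neg, ← hx, hA, map_ofNat]
    linear_combination (algebraMap ℚ[X] (RatFunc ℚ) q) ^ 4 * h'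

lemma exists_seq (n : ℕ) : ∃ x y : RatFunc ℚ,
    y ^ 2 = x ^ 3 + (RatFunc.X ^ 2 + 1) * x + 1 ∧ LeadFour ((1 / 4) ^ (n + 1)) x := by
  induction n with
  | zero =>
    refine ⟨(RatFunc.X ^ 2 + 1) ^ 2 / 4, 1 + (RatFunc.X ^ 2 + 1) ^ 3 / 8, by ring, 0,
      (Polynomial.X ^ 2 + 1) ^ 2, Polynomial.C 4, ?_, ?_, ?_, ?_, ?_⟩
    · compute_degree
    · simp
    · simp
    · have h : ((Polynomial.X ^ 2 + 1) ^ 2 : Polynomial ℚ).coeff (2 * 2) = 1 := by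
        rw [Polynomial.coeff_pow_of_natDegree_le (by compute_degree)]
        simp [Polynomial.coeff_one]
      simpa using h
    · rw [show (Polynomial.C 4 : Polynomial ℚ) = 4 from rfl, map_ofNat, map_pow, algebraMap_A]
      ring
  | succ n ih =>
    obtain ⟨x, y, hxy, hL⟩ := ih
    have hc : ((1 / 4 : ℚ) ^ (n + 1)) ≠ 0 := by positivity
    have h0 := hL.cubic_ne hc
    have hy : y ≠ 0 := by
      rintro rfl
      exact h0 (by rw [← hxy]; ring)
    obtain ⟨l, hl⟩ : ∃ l, l * (2 * y) = 3 * x ^ 2 + (RatFunc.X ^ 2 + 1) :=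
      ⟨(3 * x ^ 2 + (RatFunc.X ^ 2 + 1)) / (2 * y), by field_simp⟩
    refine ⟨l ^ 2 - 2 * x, y + l * (l ^ 2 - 2 * x - x), ?_, ?_⟩
    · linear_combination hxy + (l ^ 2 - 3 * x) * hl
    · rw [pow_succ, mul_one_div]
      refine hL.double hc ?_
      rw [← hxy]
      linear_combination (l * (2 * y) + 3 * x ^ 2 + (RatFunc.X ^ 2 + 1)) * hl - 8 * x * hxy

/-- The group `E(K)` of `K`-rational points of the elliptic curve
`E : y² = x³ + (t²+1)x + 1` over `K = ℚ(t)` is infinite. -/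
theorem stmt_8 : Infinite Eq_t.toAffine.Point := by
  choose x y hxy hL using exists_seq
  have hns : ∀ n, Eq_t.toAffine.Nonsingular (x n) (y n) := by
    intro n
    have hy : y n ≠ 0 := by
      intro h
      refine (hL n).cubic_ne (by positivity) ?_
      rw [← hxy, h]; ring
    rw [WeierstrassCurve.Affine.nonsingular_iff, WeierstrassCurve.Affine.equation_iff]
    refine ⟨?_, Or.inr ?_⟩
    · simp only [Eq_t]
      linear_combination hxy n
    · simp only [Eq_t]
      intro h
      apply hy
      have : 2 * y n = 0 := by linear_combination h
      simpa using this
  refine Infinite.of_injective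
    (fun n => (WeierstrassCurve.Affine.Point.some (x n) (y n) (hns n) : Eq_t.toAffine.Point)) ?_
  intro a b hab
  simp only [WeierstrassCurve.Affine.Point.some.injEq] at hab
  have h := (hL a).unique (hab.1 ▸ hL b)
  have := pow_right_injective₀ (by norm_num : (0 : ℚ) < 1 / 4) (by norm_num) h
  omega
end
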